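/- arXiv:2511.07904 — 2 statements merged into one kernel-verified Lean document; each statement's English description precedes it below -/
import Mathlib

section
/- Let (T,d) be a metric space with its Borel σ-algebra, let T̃ ⊆ T be a nonempty set, and write Φ(τ) := d(τ,T̃) for the distance from τ to T̃. Let P₁ be a Borel probability measure on T, let α > 0, and let R : T → ℝ be a measurable function that is monotonically non-increasing in the distance to T̃, i.e. for all τ₁, τ₂ ∈ T, d(τ₁,T̃) ≤ d(τ₂,T̃) implies R(τ₁) ≥ R(τ₂). Assume τ ↦ exp(R(τ)/α) is P₁-integrable with Z := ∫ exp(R(τ)/α) dP₁(τ) > 0, and let P₂ be the Gibbs update of P₁, i.e. P₂ has density (1/Z)·exp(R/α) with respect to P₁. Then for every real p ≥ 1 such that Φ^p and Φ^p·exp(R/α) are P₁-integrable, the p-th moment of the distance to T̃ does not increase: ∫ d(τ,T̃)^p dP₂(τ) ≤ ∫ d(τ,T̃)^p dP₁(τ). -/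
/-!
The density `exp (R / α)` is a non-increasing function of the distance `Φ` to the optimal set, so
`Φ ^ p` and `exp (R / α)` are oppositely ordered. Chebyshev's association inequality
(`integral_mul_le_of_antivary`) then gives `E[Φ ^ p * exp (R / α)] ≤ E[Φ ^ p] * Z` under `P₁`,
and dividing by `Z` yields the claim, because the left side divided by `Z` is the `p`-th moment
under `P₂`.
-/

open MeasureTheory Real

/-- Chebyshev's association inequality: oppositely ordered functions are negatively correlated.
This follows by integrating `(f x - f y) * (g x - g y) ≤ 0` first in `y` and then in `x`. -/
theorem integral_mul_le_of_antivary {T : Type*} [MeasurableSpace T] {μ : Measure T}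
    [IsProbabilityMeasure μ] {f g : T → ℝ} (hfg : Antivary f g)
    (hf : Integrable f μ) (hg : Integrable g μ) (hmul : Integrable (fun x => f x * g x) μ) :
    ∫ x, f x * g x ∂μ ≤ (∫ x, f x ∂μ) * ∫ x, g x ∂μ := by
  have h_inner : ∀ x, f x * g x + ∫ y, f y * g y ∂μ
      ≤ f x * (∫ y, g y ∂μ) + g x * ∫ y, f y ∂μ := by
    intro x
    have h := integral_mono (μ := μ) (f := fun y => f x * g x + f y * g y)
      (g := fun y => f x * g y + g x * f y)
      ((integrable_const _).add hmul) ((hg.const_mul _).add (hf.const_mul _))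
      (fun y => by
        rcases lt_trichotomy (g x) (g y) with hlt | heq | hlt
        · nlinarith [hfg hlt]
        · simp only [heq]; linarith
        · nlinarith [hfg hlt])
    rw [integral_add (integrable_const _) hmul,
      integral_add (hg.const_mul _) (hf.const_mul _), integral_const, integral_const_mul,
      integral_const_mul] at h
    simpa using h
  have h := integral_mono (hmul.add (integrable_const (∫ y, f y * g y ∂μ)))
    ((hf.mul_const (∫ y, g y ∂μ)).add (hg.mul_const (∫ y, f y ∂μ))) h_inner
  simp only [Pi.add_apply] at h
  rw [integral_add hmul (integrable_const _),
    integral_add (hf.mul_const _) (hg.mul_const _), integral_mul_const, integral_mul_const] at h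
  simp only [integral_const, probReal_univ, one_smul] at h
  linarith

/-- **Theorem 1 (moment form).** If the return `R` is non-increasing in the distance to the
optimal trajectory set `Ttil`, then the Gibbs update `P₂` of `P₁` does not increase the
`p`-th moment of the distance to `Ttil`. -/
theorem gibbs_update_distance_moment_nonincreasing
    {T : Type*} [MetricSpace T] [MeasurableSpace T] [BorelSpace T]
    (Ttil : Set T) (hTtil : Ttil.Nonempty)
    (P₁ : Measure T) [IsProbabilityMeasure P₁]
    (α : ℝ) (hα : 0 < α)
    (R : T → ℝ) (hRmeas : Measurable R)
    (hRmono : ∀ τ₁ τ₂ : T,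
      Metric.infDist τ₁ Ttil ≤ Metric.infDist τ₂ Ttil → R τ₂ ≤ R τ₁)
    (hint : Integrable (fun τ => Real.exp (R τ / α)) P₁)
    (Z : ℝ) (hZ : Z = ∫ τ, Real.exp (R τ / α) ∂P₁) (hZpos : 0 < Z)
    (P₂ : Measure T)
    (hP₂ : P₂ = P₁.withDensity
      (fun τ => ENNReal.ofReal ((1 / Z) * Real.exp (R τ / α))))
    (p : ℝ) (hp : 1 ≤ p)
    (hΦp : Integrable (fun τ => Metric.infDist τ Ttil ^ p) P₁)
    (hΦpR : Integrable
      (fun τ => Metric.infDist τ Ttil ^ p * Real.exp (R τ / α)) P₁) :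
    ∫ τ, Metric.infDist τ Ttil ^ p ∂P₂ ≤ ∫ τ, Metric.infDist τ Ttil ^ p ∂P₁ := by
  have h_anti : Antivary (fun τ => Metric.infDist τ Ttil ^ p) (fun τ => exp (R τ / α)) := by
    intro x y hxy
    -- By monotonicity of `R`, a strictly larger density at `y` forces `y` to be closer.
    have hR : R x < R y := (div_lt_div_iff_of_pos_right hα).1 (exp_lt_exp.1 hxy)
    have hd : Metric.infDist y Ttil ≤ Metric.infDist x Ttil := by
      by_contra! h
      exact absurd (hRmono x y h.le) (not_le.2 hR)
    exact rpow_le_rpow Metric.infDist_nonneg hd (by linarith)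
  have h_cheb := integral_mul_le_of_antivary h_anti hΦp hint hΦpR
  rw [← hZ] at h_cheb
  have h_eq : ∫ τ, Metric.infDist τ Ttil ^ p ∂P₂
      = (1 / Z) * ∫ τ, Metric.infDist τ Ttil ^ p * exp (R τ / α) ∂P₁ := by
    rw [hP₂, integral_withDensity_eq_integral_toReal_smul (by fun_prop)
      (ae_of_all _ fun _ => ENNReal.ofReal_lt_top), ← integral_const_mul]
    congr 1 with τ
    rw [ENNReal.toReal_ofReal (by positivity), smul_eq_mul]
    ring
  rw [h_eq, one_div_mul_eq_div, div_le_iff₀ hZpos]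
  exact h_cheb
end

section
/- Let μ be a probability measure on a measurable space T, let R : T → ℝ be measurable, let α > 0, assume τ ↦ exp(R(τ)/α) is μ-integrable with Z := ∫ exp(R(τ)/α) dμ(τ) > 0, and let ν := μ.withDensity(τ ↦ (1/Z)·exp(R(τ)/α)) be the Gibbs update of μ. Then among all probability measures Q with Q ≪ μ, R Q-integrable, and KL(Q‖μ) finite, the objective ∫ R dQ − α·KL(Q‖μ) attains its maximum value α·log Z exactly at Q = ν; that is, ∫ R dQ − α·KL(Q‖μ) = α·log Z if and only if Q = ν. -/
/-!
The Gibbs update `ν` is the exponential tilting `μ.tilted (R / α)`, so the log-likelihood ratios of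
`Q` with respect to `μ` and to `ν` differ by `R / α - log Z`. Integrating against `Q` gives
`α * KL(Q‖ν) = α * log Z - (∫ R dQ - α * KL(Q‖μ))` (`integral_llr_tilted_right`). Hence the
objective equals `α * log Z` iff `KL(Q‖ν) = 0`, which by the converse of Gibbs' inequality
(`InformationTheory.klDiv_eq_zero_iff`) means `Q = ν`.
-/

open MeasureTheory

/-- The Kullback–Leibler divergence `KL(Q‖μ) = ∫ log(dQ/dμ) dQ` (as a real number, meaningful
when `Q ≪ μ` and the integrand is `Q`-integrable, i.e. when the divergence is finite). -/
noncomputable def klDiv {T : Type*} [MeasurableSpace T] (Q μ : Measure T) : ℝ :=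
  ∫ τ, Real.log ((Q.rnDeriv μ) τ).toReal ∂Q

/-- **Uniqueness of the maximum entropy update.** Among probability measures `Q ≪ μ` with `R`
`Q`-integrable and finite `KL(Q‖μ)`, the objective `∫ R dQ − α·KL(Q‖μ)` attains its maximum
value `α·log Z` exactly at the Gibbs update `ν` of `μ`. -/
theorem gibbs_update_unique_maximizer
    {T : Type*} [MeasurableSpace T]
    (μ : Measure T) [IsProbabilityMeasure μ]
    (R : T → ℝ) (hRmeas : Measurable R)
    (α : ℝ) (hα : 0 < α)
    (hint : Integrable (fun τ => Real.exp (R τ / α)) μ)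
    (Z : ℝ) (hZ : Z = ∫ τ, Real.exp (R τ / α) ∂μ) (hZpos : 0 < Z)
    (ν : Measure T)
    (hν : ν = μ.withDensity (fun τ => ENNReal.ofReal ((1 / Z) * Real.exp (R τ / α))))
    (Q : Measure T) [IsProbabilityMeasure Q]
    (hQμ : Q ≪ μ)
    (hRQ : Integrable R Q)
    (hKLμ : Integrable (fun τ => Real.log ((Q.rnDeriv μ) τ).toReal) Q) :
    ∫ τ, R τ ∂Q - α * klDiv Q μ = α * Real.log Z ↔ Q = ν := by
  have hν_tilted : ν = μ.tilted (fun τ => R τ / α) := by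
    rw [hν, Measure.tilted, ← hZ]
    simp only [div_eq_inv_mul, mul_one]
  have : IsProbabilityMeasure ν := hν_tilted ▸ isProbabilityMeasure_tilted hint
  have hμν : μ ≪ ν := hν_tilted ▸ absolutelyContinuous_tilted hint
  have hQν : Q ≪ ν := hQμ.trans hμν
  have hRα : Integrable (fun τ => R τ / α) Q := hRQ.div_const α
  have hKLν : Integrable (llr Q ν) Q :=
    hν_tilted ▸ integrable_llr_tilted_right hQμ hRα hKLμ hint
  have hkey : ∫ τ, llr Q ν τ ∂Q = klDiv Q μ - (∫ τ, R τ ∂Q) / α + Real.log Z := by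
    rw [hν_tilted, integral_llr_tilted_right hQμ hRα hint hKLμ, ← hZ, integral_div]
    simp only [klDiv, llr]
  have hgibbs : ∫ τ, llr Q ν τ ∂Q = 0 ↔ Q = ν := by
    rw [← InformationTheory.klDiv_eq_zero_iff,
      ← InformationTheory.toReal_klDiv_of_measure_eq hQν (by simp), ENNReal.toReal_eq_zero_iff,
      or_iff_left (InformationTheory.klDiv_ne_top hQν hKLν)]
  rw [← hgibbs, hkey]
  have hscale : α * (klDiv Q μ - (∫ τ, R τ ∂Q) / α + Real.log Z)
      = α * Real.log Z - (∫ τ, R τ ∂Q - α * klDiv Q μ) := by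
    field_simp
    ring
  rw [← mul_right_inj' (b := klDiv Q μ - _ + _) hα.ne', mul_zero, hscale, sub_eq_zero, eq_comm]
end
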